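/- arXiv:2604.18306 — 7 statements merged into one kernel-verified Lean document; each statement's English description precedes it below -/
import Mathlib

section
/- If k > 2 is a real number satisfying k³ − 6k² + 8k − 4 = 0, then 1 − (2k√(k−1) − 4k + 4)/(k−2)² = 1 − 2/k; that is, f(k) = 1 − 2/k. -/
noncomputable def f (k : ℝ) : ℝ :=
  1 - (2 * k * Real.sqrt (k - 1) - 4 * k + 4) / (k - 2) ^ 2

theorem stmt1 (k : ℝ) (hk : 2 < k) (hroot : k ^ 3 - 6 * k ^ 2 + 8 * k - 4 = 0) :
    f k = 1 - 2 / k := by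
  set s := Real.sqrt (k - 1) with hs_def
  have hs_sq : s ^ 2 = k - 1 := Real.sq_sqrt (by linarith)
  have hs : 1 < s := Real.lt_sqrt_of_sq_lt (by linarith)
  clear_value s
  obtain rfl : k = s ^ 2 + 1 := by linarith
  have hcubic : s ^ 3 - s ^ 2 - s - 1 = 0 := by
    have hpos : 0 < s ^ 3 + s ^ 2 - s + 1 := by
      nlinarith [pow_pos (zero_lt_one.trans hs) 3]
    refine (mul_eq_zero.mp ?_).resolve_right hpos.ne'
    linear_combination hroot
  have hk0 : s ^ 2 + 1 ≠ 0 := by positivity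
  have hk2 : (s ^ 2 + 1 - 2) ^ 2 ≠ 0 := pow_ne_zero 2 (sub_pos.mpr hk).ne'
  rw [f, ← hs_def, sub_right_inj, div_eq_div_iff hk2 hk0]
  linear_combination 2 * (s - 1) ^ 2 * hcubic
end

section
/- For every real k with k > k₁ one has f(k) < 1 − 2/k, i.e. 1 − (2k√(k−1) − 4k + 4)/(k−2)² < 1 − 2/k. -/
noncomputable def k₁ : ℝ :=
  2 + (2 + Real.sqrt (44 / 27)) ^ ((1 : ℝ) / 3)
    + (2 - Real.sqrt (44 / 27)) ^ ((1 : ℝ) / 3)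

theorem k₁_gt_two : 2 < k₁ := by
  have hs : Real.sqrt (44 / 27) < 2 := by
    rw [Real.sqrt_lt' (by norm_num)]; norm_num
  have ha : 0 < (2 + Real.sqrt (44 / 27)) ^ ((1 : ℝ) / 3) := by positivity
  have hb : 0 < (2 - Real.sqrt (44 / 27)) ^ ((1 : ℝ) / 3) :=
    Real.rpow_pos_of_pos (by linarith) _
  unfold k₁
  linarith

theorem k₁_cubic : k₁ ^ 3 - 6 * k₁ ^ 2 + 8 * k₁ - 4 = 0 := by
  have hs : Real.sqrt (44 / 27) < 2 := by
    rw [Real.sqrt_lt' (by norm_num)]; norm_num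
  have hsq : Real.sqrt (44 / 27) ^ 2 = 44 / 27 := Real.sq_sqrt (by norm_num)
  have cube_rpow : ∀ y : ℝ, 0 ≤ y → (y ^ ((1 : ℝ) / 3)) ^ 3 = y := fun y hy => by
    rw [← Real.rpow_natCast, ← Real.rpow_mul hy]; norm_num
  have ha := cube_rpow (2 + Real.sqrt (44 / 27)) (by positivity)
  have hb := cube_rpow (2 - Real.sqrt (44 / 27)) (by linarith)
  have hab : (2 + Real.sqrt (44 / 27)) ^ ((1 : ℝ) / 3) *
      (2 - Real.sqrt (44 / 27)) ^ ((1 : ℝ) / 3) = 4 / 3 := by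
    have hb0 : 0 ≤ (2 - Real.sqrt (44 / 27)) ^ ((1 : ℝ) / 3) :=
      Real.rpow_nonneg (by linarith) _
    refine (pow_left_inj₀ (by positivity) (by norm_num) three_ne_zero).1 ?_
    rw [mul_pow, ha, hb]
    linear_combination -hsq
  unfold k₁
  generalize (2 + Real.sqrt (44 / 27)) ^ ((1 : ℝ) / 3) = a at *
  generalize (2 - Real.sqrt (44 / 27)) ^ ((1 : ℝ) / 3) = b at *
  linear_combination ha + hb + 3 * (a + b) * hab

theorem cubic_pos_of_k₁_lt {k : ℝ} (hk : k₁ < k) :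
    0 < k ^ 3 - 6 * k ^ 2 + 8 * k - 4 := by
  have h2 := k₁_gt_two
  have h0 := k₁_cubic
  have h4 : 4 < k₁ := by
    by_contra! h
    nlinarith [mul_nonneg (mul_nonneg (sub_nonneg.2 h2.le) (sub_nonneg.2 h))
      (by linarith : 0 ≤ k₁)]
  have hfac : k ^ 3 - 6 * k ^ 2 + 8 * k - 4 =
      (k - k₁) * (k * (k - 4) + k₁ * (k₁ - 4) + (k - 2) * (k₁ - 2) + 4) := by
    linear_combination h0
  rw [hfac]
  have hk0 : 0 < k - k₁ := by linarith
  have h₁ : 0 < k * (k - 4) := mul_pos (by linarith) (by linarith)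
  have h₂ : 0 < k₁ * (k₁ - 4) := mul_pos (by linarith) (by linarith)
  have h₃ : 0 < (k - 2) * (k₁ - 2) := mul_pos (by linarith) (by linarith)
  positivity

theorem stmt2 (k : ℝ) (hk : k₁ < k) : f k < 1 - 2 / k := by
  have h2 : 2 < k := k₁_gt_two.trans hk
  have hroot : (3 * k ^ 2 - 6 * k + 4) / k ^ 2 < Real.sqrt (k - 1) := by
    apply Real.lt_sqrt_of_sq_lt
    rw [div_pow, div_lt_iff₀ (by positivity)]
    have hfac := mul_pos (cubic_pos_of_k₁_lt hk) (pow_pos (sub_pos.2 h2) 2)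
    linear_combination hfac
  rw [div_lt_iff₀ (by positivity)] at hroot
  unfold f
  have hmain : 2 / k < (2 * k * Real.sqrt (k - 1) - 4 * k + 4) / (k - 2) ^ 2 := by
    rw [div_lt_div_iff₀ (by linarith) (pow_pos (sub_pos.2 h2) 2)]
    linear_combination 2 * hroot
  linarith
end

section
/- For every real k with k > k₂ one has g(k) < 1 − 1/k, i.e. 1 − (√(2k³ − k² − 2k + 1) − 3k + 3)/(k−2)² < 1 − 1/k. -/
noncomputable def g (k : ℝ) : ℝ :=
  1 - (Real.sqrt (2 * k ^ 3 - k ^ 2 - 2 * k + 1) - 3 * k + 3) / (k - 2) ^ 2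

noncomputable def k₂ : ℝ :=
  3 / 2 + (5 / 8 + Real.sqrt (83 / 432)) ^ ((1 : ℝ) / 3)
    + (5 / 8 - Real.sqrt (83 / 432)) ^ ((1 : ℝ) / 3)

/-- The shift `k₂ - 3/2` is a root of the depressed cubic, and it is at least `3/2`. -/
lemma k₂_sub_cubic :
    3 / 2 ≤ k₂ - 3 / 2 ∧ (k₂ - 3 / 2) ^ 3 = 7 / 4 * (k₂ - 3 / 2) + 5 / 4 := by
  have hs : Real.sqrt (83 / 432) ^ 2 = 83 / 432 := Real.sq_sqrt (by norm_num)
  have hs0 := Real.sqrt_nonneg (83 / 432)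
  unfold k₂
  generalize Real.sqrt (83 / 432) = s at hs hs0
  have hx : 0 ≤ 5 / 8 + s := by linarith
  have hy : 0 ≤ 5 / 8 - s := by nlinarith
  have cube : ∀ x : ℝ, 0 ≤ x → (x ^ ((1 : ℝ) / 3)) ^ 3 = x := fun x h => by
    rw [← Real.rpow_natCast, ← Real.rpow_mul h]
    norm_num
  have ha := cube _ hx
  have hb := cube _ hy
  have ha0 := Real.rpow_nonneg hx ((1 : ℝ) / 3)
  have hb0 := Real.rpow_nonneg hy ((1 : ℝ) / 3)
  generalize (5 / 8 + s) ^ ((1 : ℝ) / 3) = a at ha ha0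
  generalize (5 / 8 - s) ^ ((1 : ℝ) / 3) = b at hb hb0
  have hab : a * b = 7 / 12 := by
    refine (pow_left_inj₀ (mul_nonneg ha0 hb0) (by norm_num) three_ne_zero).1 ?_
    rw [mul_pow, ha, hb]
    linear_combination -hs
  constructor
  · nlinarith [sq_nonneg (a - b)]
  · linear_combination ha + hb + 3 * (a + b) * hab

/-- The cubic `2k³ - 9k² + 10k - 4` is positive to the right of `k₂`. -/
lemma cubic_pos_of_k₂_lt {k : ℝ} (hk : k₂ < k) :
    0 < 2 * k ^ 3 - 9 * k ^ 2 + 10 * k - 4 := by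
  obtain ⟨hu, hc⟩ := k₂_sub_cubic
  have hfactor : 2 * k ^ 3 - 9 * k ^ 2 + 10 * k - 4 =
      (k - k₂) * (2 * ((k - 3 / 2) ^ 2 + (k - 3 / 2) * (k₂ - 3 / 2) + (k₂ - 3 / 2) ^ 2)
        - 7 / 2) := by
    linear_combination 2 * hc
  rw [hfactor]
  exact mul_pos (sub_pos.2 hk) (by nlinarith)

theorem stmt5 (k : ℝ) (hk : k₂ < k) : g k < 1 - 1 / k := by
  have hk2 : 2 < k := by linarith [k₂_sub_cubic.1]
  have hsq : 0 < (k - 2) ^ 2 := pow_pos (by linarith) 2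
  have hroot : (4 * k ^ 2 - 7 * k + 4) / k < Real.sqrt (2 * k ^ 3 - k ^ 2 - 2 * k + 1) := by
    apply Real.lt_sqrt_of_sq_lt
    rw [div_pow, div_lt_iff₀ (by positivity)]
    linarith [mul_pos hsq (cubic_pos_of_k₂_lt hk)]
  rw [div_lt_iff₀ (by linarith)] at hroot
  unfold g
  apply sub_lt_sub_left
  rw [div_lt_div_iff₀ (by linarith) hsq]
  linarith
end

section
/- The function g is strictly increasing on the interval (2,∞); moreover g(k) → 2/3 as k → 2⁺ and g(k) → 1 as k → ∞. -/
/-- Rationalizing the numerator removes the singularity of `g` at `2`. -/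
lemma g_eq_of_two_lt {k : ℝ} (hk : 2 < k) :
    g k = 1 - 2 / (Real.sqrt (2 * (k - 1) + 5 + 2 / (k - 1)) + 3) := by
  have ht : 0 < k - 1 := by linarith
  set r := Real.sqrt (2 * (k - 1) + 5 + 2 / (k - 1)) with hr
  have hr0 : 0 ≤ r := Real.sqrt_nonneg _
  have hsq : (k - 1) * r ^ 2 = 2 * (k - 1) ^ 2 + 5 * (k - 1) + 2 := by
    rw [hr, Real.sq_sqrt (by positivity)]
    field_simp
  have hsqrt : Real.sqrt (2 * k ^ 3 - k ^ 2 - 2 * k + 1) = (k - 1) * r := by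
    rw [show 2 * k ^ 3 - k ^ 2 - 2 * k + 1 = ((k - 1) * r) ^ 2 by
      linear_combination -(k - 1) * hsq]
    exact Real.sqrt_sq (by positivity)
  have hk2 : (k - 2) ^ 2 ≠ 0 := pow_ne_zero 2 (by linarith)
  have hr3 : r + 3 ≠ 0 := by positivity
  rw [g, hsqrt]
  congr 1
  rw [div_eq_div_iff hk2 hr3]
  linear_combination hsq

lemma strictMonoOn_g : StrictMonoOn g (Set.Ioi (2 : ℝ)) := by
  intro a ha b hb hab
  rw [Set.mem_Ioi] at ha hb
  have ha1 : 0 < a - 1 := by linarith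
  have hb1 : 0 < b - 1 := by linarith
  have hlt : 2 * (a - 1) + 5 + 2 / (a - 1) < 2 * (b - 1) + 5 + 2 / (b - 1) := by
    have hdiff : 2 * (b - 1) + 5 + 2 / (b - 1) - (2 * (a - 1) + 5 + 2 / (a - 1)) =
        2 * (b - a) * ((a - 1) * (b - 1) - 1) / ((a - 1) * (b - 1)) := by
      field_simp
      ring
    have hprod : 0 < (a - 1) * (b - 1) - 1 := by nlinarith
    have hba : 0 < b - a := by linarith
    have : 0 < 2 * (b - a) * ((a - 1) * (b - 1) - 1) / ((a - 1) * (b - 1)) := by positivity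
    linarith
  rw [g_eq_of_two_lt ha, g_eq_of_two_lt hb]
  have hsqrt := Real.sqrt_lt_sqrt (by positivity) hlt
  gcongr

lemma tendsto_g_nhdsGT_two :
    Filter.Tendsto g (nhdsWithin 2 (Set.Ioi (2 : ℝ))) (nhds (2 / 3)) := by
  have hcont : ContinuousAt
      (fun k : ℝ => 1 - 2 / (Real.sqrt (2 * (k - 1) + 5 + 2 / (k - 1)) + 3)) 2 := by
    have : Real.sqrt (2 * ((2 : ℝ) - 1) + 5 + 2 / (2 - 1)) + 3 ≠ 0 := by positivity
    fun_prop (disch := first | assumption | norm_num)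
  have hval : (1 : ℝ) - 2 / (Real.sqrt (2 * (2 - 1) + 5 + 2 / (2 - 1)) + 3) = 2 / 3 := by
    rw [show (2 : ℝ) * (2 - 1) + 5 + 2 / (2 - 1) = 3 ^ 2 by norm_num,
      Real.sqrt_sq (by norm_num)]
    norm_num
  have hlim := hcont.tendsto.mono_left (nhdsWithin_le_nhds (s := Set.Ioi (2 : ℝ)))
  rw [hval] at hlim
  refine hlim.congr' ?_
  filter_upwards [self_mem_nhdsWithin] with k hk using (g_eq_of_two_lt hk).symm

lemma tendsto_g_atTop : Filter.Tendsto g Filter.atTop (nhds 1) := by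
  have hrad : Filter.Tendsto (fun k : ℝ => 2 * (k - 1) + 5 + 2 / (k - 1))
      Filter.atTop Filter.atTop := by
    refine Filter.tendsto_atTop_mono' _ ?_ Filter.tendsto_id
    filter_upwards [Filter.eventually_gt_atTop 2] with k hk
    have : 0 < 2 / (k - 1) := div_pos two_pos (by linarith)
    simp only [id]
    linarith
  have hden := Filter.tendsto_atTop_add_const_right _ (3 : ℝ)
    (Real.tendsto_sqrt_atTop.comp hrad)
  have hlim := (hden.const_div_atTop 2).const_sub 1
  rw [sub_zero] at hlim
  refine hlim.congr' ?_
  filter_upwards [Filter.eventually_gt_atTop 2] with k hk using (g_eq_of_two_lt hk).symm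

theorem stmt7 :
    StrictMonoOn g (Set.Ioi (2 : ℝ)) ∧
      Filter.Tendsto g (nhdsWithin 2 (Set.Ioi (2 : ℝ))) (nhds (2 / 3)) ∧
      Filter.Tendsto g Filter.atTop (nhds 1) :=
  ⟨strictMonoOn_g, tendsto_g_nhdsGT_two, tendsto_g_atTop⟩
end

section
/- For every real α with 1 − 1/k₂ < α < 1 there exists a real number k > k₂ (in particular k > 3) such that g(k) < α < 1 − 1/k. -/
/-- Cardano's formula: `k₂ - 3 / 2` is a positive root of the depressed cubic. -/
lemma exists_k₂_eq : ∃ t : ℝ, 0 < t ∧ k₂ = 3 / 2 + t ∧ t ^ 3 = 5 / 4 + 7 / 4 * t := by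
  have hs : Real.sqrt (83 / 432) ^ 2 = 83 / 432 := Real.sq_sqrt (by norm_num)
  have hs0 : 0 ≤ Real.sqrt (83 / 432) := Real.sqrt_nonneg _
  have hk : k₂ = 3 / 2 + (5 / 8 + Real.sqrt (83 / 432)) ^ ((1 : ℝ) / 3)
    + (5 / 8 - Real.sqrt (83 / 432)) ^ ((1 : ℝ) / 3) := rfl
  generalize Real.sqrt (83 / 432) = s at hs hs0 hk
  have ha : 0 < 5 / 8 + s := by linarith
  have hb : 0 < 5 / 8 - s := by nlinarith
  have cube : ∀ x : ℝ, 0 < x → (x ^ ((1 : ℝ) / 3)) ^ 3 = x := by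
    intro x hx
    rw [← Real.rpow_natCast, ← Real.rpow_mul hx.le]
    norm_num
  have hu := cube _ ha
  have hv := cube _ hb
  have hu0 : 0 < (5 / 8 + s) ^ ((1 : ℝ) / 3) := Real.rpow_pos_of_pos ha _
  have hv0 : 0 < (5 / 8 - s) ^ ((1 : ℝ) / 3) := Real.rpow_pos_of_pos hb _
  generalize (5 / 8 + s) ^ ((1 : ℝ) / 3) = u at hu hu0 hk
  generalize (5 / 8 - s) ^ ((1 : ℝ) / 3) = v at hv hv0 hk
  have huv : u * v = 7 / 12 := by
    refine (pow_left_inj₀ (by positivity) (by norm_num) (three_ne_zero)).1 ?_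
    rw [mul_pow, hu, hv]
    linear_combination -hs
  refine ⟨u + v, by positivity, by rw [hk]; ring, ?_⟩
  linear_combination hu + hv + 3 * (u + v) * huv

lemma three_lt_k₂ : 3 < k₂ := by
  obtain ⟨t, ht, hk, h⟩ := exists_k₂_eq
  by_contra! hle
  have : t ≤ 3 / 2 := by linarith
  nlinarith [mul_nonneg ht.le (sub_nonneg.2 this)]

lemma k₂_root : 2 * k₂ ^ 3 - 9 * k₂ ^ 2 + 10 * k₂ - 4 = 0 := by
  obtain ⟨t, -, hk, h⟩ := exists_k₂_eq
  rw [hk]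
  linear_combination 2 * h

lemma g_lt_of_k₂_lt {k : ℝ} (hk : k₂ < k) : g k < 1 - 1 / k := by
  have h3 : 3 < k := three_lt_k₂.trans hk
  have hk0 : 0 < k := by linarith
  have hk2 : 0 < (k - 2) ^ 2 := pow_pos (by linarith) 2
  have hsqrt : (4 * k ^ 2 - 7 * k + 4) / k < Real.sqrt (2 * k ^ 3 - k ^ 2 - 2 * k + 1) := by
    apply Real.lt_sqrt_of_sq_lt
    rw [div_pow, div_lt_iff₀ (by positivity)]
    linear_combination mul_pos hk2 (cubic_pos_of_k₂_lt hk)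
  unfold g
  apply sub_lt_sub_left
  rw [lt_div_iff₀ hk2]
  have : 1 / k * (k - 2) ^ 2 = (4 * k ^ 2 - 7 * k + 4) / k - 3 * k + 3 := by
    field_simp
    ring
  linarith

lemma continuousAt_g {k : ℝ} (hk : k ≠ 2) : ContinuousAt g k := by
  have : (k - 2) ^ 2 ≠ 0 := pow_ne_zero 2 (sub_ne_zero.2 hk)
  unfold g
  fun_prop (disch := assumption)

theorem stmt9 (α : ℝ) (h1 : 1 - 1 / k₂ < α) (h2 : α < 1) :
    ∃ k : ℝ, k₂ < k ∧ 3 < k ∧ g k < α ∧ α < 1 - 1 / k := by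
  have h3 := three_lt_k₂
  have hα : 0 < 1 - α := by linarith
  have hk : k₂ < 1 / (1 - α) := by
    rw [lt_one_div (by linarith) hα]
    linarith
  have hg : g (1 / (1 - α)) < α := by
    simpa using g_lt_of_k₂_lt hk
  have hev := (continuousAt_g (by linarith : 1 / (1 - α) ≠ 2)).eventually_lt_const hg
  obtain ⟨k, hgk, hlt⟩ := ((hev.filter_mono nhdsWithin_le_nhds).and
    (self_mem_nhdsWithin : Set.Ioi (1 / (1 - α)) ∈ nhdsWithin _ _)).exists
  have hlt : 1 / (1 - α) < k := hlt
  refine ⟨k, hk.trans hlt, h3.trans (hk.trans hlt), hgk, ?_⟩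
  have := (one_div_lt hα (by linarith)).1 hlt
  linarith
end

section
/- Let k ≥ 3 be a real number and let α be a real number with 0 < α < 1 and g(k) < α. Then k²(1−α)² < (4α−2)(k−1)α. -/
theorem stmt12 (k α : ℝ) (hk : 3 ≤ k) (hα0 : 0 < α) (hα1 : α < 1)
    (hgk : g k < α) :
    k ^ 2 * (1 - α) ^ 2 < (4 * α - 2) * (k - 1) * α := by
  have hc : 0 < (k - 2) ^ 2 := pow_pos (by linarith) 2
  have hroot : (1 - α) * (k - 2) ^ 2 + 3 * (k - 1) <
      Real.sqrt (2 * k ^ 3 - k ^ 2 - 2 * k + 1) := by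
    have hdiv : 1 - α < (Real.sqrt (2 * k ^ 3 - k ^ 2 - 2 * k + 1) - 3 * k + 3) / (k - 2) ^ 2 := by
      unfold g at hgk
      linarith
    rw [lt_div_iff₀ hc] at hdiv
    linarith
  have hnonneg : 0 ≤ (1 - α) * (k - 2) ^ 2 + 3 * (k - 1) :=
    add_nonneg (mul_nonneg (by linarith) hc.le) (by linarith)
  have hsq := (Real.lt_sqrt hnonneg).mp hroot
  have hquad : (k - 2) ^ 2 * (k ^ 2 * (1 - α) ^ 2 - (4 * α - 2) * (k - 1) * α) < 0 := by
    linarith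
  linarith [(pos_iff_neg_of_mul_neg hquad).mp hc]
end

section
/- There exists a constant C > 0, depending only on ρ̃ and γ, such that for every ρ > 0: if ρ < 2ρ̃ then (ρ − ρ̃)² ≤ C·K(ρ), and if ρ ≥ 2ρ̃ then (ρ − ρ̃)^γ ≤ C·K(ρ). -/
/-- The potential energy density `K(ρ) = ρ ∫_{ρ̃}^{ρ} (s^γ - ρ̃^γ)/s² ds`. -/
noncomputable def potK (γ ρt ρ : ℝ) : ℝ :=
  ρ * ∫ s in ρt..ρ, (s ^ γ - ρt ^ γ) / s ^ 2

/-- The potential energy density in closed form, in terms of the ratio `u = ρ / ρ̃`. -/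
theorem potK_mul_eq {γ t u : ℝ} (hγ : 1 < γ) (ht : 0 < t) (hu : 0 < u) :
    potK γ t (t * u) = t ^ γ * ((u ^ γ - 1 - γ * (u - 1)) / (γ - 1)) := by
  have hγ' : γ - 1 ≠ 0 := by linarith
  have htu : 0 < t * u := mul_pos ht hu
  have hpos : ∀ s ∈ Set.uIcc t (t * u), 0 < s := fun s hs =>
    lt_of_lt_of_le (lt_min ht htu) hs.1
  have hderiv : ∀ s ∈ Set.uIcc t (t * u),
      HasDerivAt (fun x : ℝ => x ^ (γ - 1) / (γ - 1) + t ^ γ * x⁻¹)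
        ((s ^ γ - t ^ γ) / s ^ 2) s := by
    intro s hs
    have hs0 := hpos s hs
    have h1 := (Real.hasDerivAt_rpow_const (p := γ - 1) (Or.inl hs0.ne')).div_const (γ - 1)
    have h2 := (hasDerivAt_inv hs0.ne').const_mul (t ^ γ)
    refine (h1.add h2).congr_deriv ?_
    have hs2 : s ^ (γ - 1 - 1) = s ^ γ / s ^ 2 := by
      rw [Real.rpow_sub_one hs0.ne', Real.rpow_sub_one hs0.ne']
      field_simp
    rw [hs2]
    field_simp
    ring
  have hint : IntervalIntegrable (fun s : ℝ => (s ^ γ - t ^ γ) / s ^ 2)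
      MeasureTheory.volume t (t * u) := by
    apply ContinuousOn.intervalIntegrable
    intro s hs
    have hs0 := hpos s hs
    exact (((Real.continuousAt_rpow_const s γ (Or.inl hs0.ne')).sub continuousAt_const).div
      (continuousAt_id.pow 2) (pow_ne_zero 2 hs0.ne')).continuousWithinAt
  rw [potK, intervalIntegral.integral_eq_sub_of_hasDerivAt hderiv hint,
    Real.rpow_sub_one htu.ne', Real.rpow_sub_one ht.ne', Real.mul_rpow ht.le hu.le]
  field_simp
  ring

/-- Quadratic lower bound for the relative energy of `u ↦ u ^ γ` at `1`, for `u ≤ 2`. -/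
theorem sub_one_sq_le_relative_energy {γ u : ℝ} (hγ : 1 < γ) (hu : 0 < u) (hu2 : u ≤ 2) :
    (u - 1) ^ 2 ≤ 9 * ((u ^ γ - 1 - γ * (u - 1)) / (γ - 1)) := by
  have hγ' : 0 < γ - 1 := by linarith
  have hpow : u * (1 + (γ - 1) * Real.log u) ≤ u ^ γ := by
    have h := Real.add_one_le_exp (Real.log u * (γ - 1))
    rw [← Real.rpow_def_of_pos hu, Real.rpow_sub_one hu.ne', le_div_iff₀ hu] at h
    linarith
  have hr : 0 < √u := Real.sqrt_pos.2 hu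
  have hsq : √u ^ 2 = u := Real.sq_sqrt hu.le
  have hlog : 2 * u - 2 * √u ≤ u * Real.log u := by
    have h := Real.one_sub_inv_le_log_of_pos hr
    rw [Real.log_sqrt hu.le] at h
    have h' := mul_le_mul_of_nonneg_left h hu.le
    have hinv : u * (√u)⁻¹ = √u := by
      nth_rewrite 1 [← hsq]
      field_simp
    linarith
  have hlow : (1 - √u) ^ 2 ≤ (u ^ γ - 1 - γ * (u - 1)) / (γ - 1) := by
    rw [le_div_iff₀ hγ']
    nlinarith [mul_le_mul_of_nonneg_left hlog hγ'.le]
  have hr2 : √u ≤ 2 := by nlinarith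
  have hfac : (u - 1) ^ 2 = (1 + √u) ^ 2 * (1 - √u) ^ 2 := by
    nth_rewrite 1 [← hsq]
    ring
  have h9 : (1 + √u) ^ 2 ≤ 9 := by nlinarith
  rw [hfac]
  exact (mul_le_mul_of_nonneg_right h9 (sq_nonneg _)).trans (by linarith)

/-- Strict Bernoulli inequality at `2`. -/
theorem two_rpow_sub_pos {γ : ℝ} (hγ : 1 < γ) : 0 < (2 : ℝ) ^ γ - γ - 1 := by
  have h := one_add_mul_self_lt_rpow_one_add (s := 1) (by norm_num) one_ne_zero hγ
  norm_num at h
  linarith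

/-- Lower bound of order `γ` for the relative energy of `u ↦ u ^ γ` at `1`, for `2 ≤ u`. -/
theorem rpow_le_relative_energy {γ u : ℝ} (hγ : 1 < γ) (hu : 2 ≤ u) :
    u ^ γ ≤ 2 ^ γ * (γ - 1) / (2 ^ γ - γ - 1) * ((u ^ γ - 1 - γ * (u - 1)) / (γ - 1)) := by
  have hγ' : 0 < γ - 1 := by linarith
  have hδ := two_rpow_sub_pos hγ
  obtain ⟨v, rfl⟩ : ∃ v, u = 2 * v := ⟨u / 2, by ring⟩
  have hv : 1 ≤ v := by linarith
  have hB := one_add_mul_self_le_rpow_one_add (s := v - 1) (by linarith) hγ.le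
  rw [add_sub_cancel] at hB
  have hmain : (2 ^ γ - γ - 1) * v ^ γ ≤ 2 ^ γ * v ^ γ - 1 - γ * (2 * v - 1) := by
    nlinarith [mul_le_mul_of_nonneg_left hB (by linarith : 0 ≤ γ + 1),
      mul_nonneg (mul_nonneg (by linarith : 0 ≤ γ) hγ'.le) (sub_nonneg.2 hv)]
  rw [Real.mul_rpow (by norm_num) (by linarith), div_mul_div_comm,
    le_div_iff₀ (mul_pos hδ hγ')]
  have hc : (0 : ℝ) ≤ 2 ^ γ * (γ - 1) := by positivity
  linarith [mul_le_mul_of_nonneg_left hmain hc]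

theorem stmt15 (γ ρt : ℝ) (hγ : 1 < γ) (hρt : 0 < ρt) :
    ∃ C : ℝ, 0 < C ∧
      ∀ ρ : ℝ, 0 < ρ →
        (ρ < 2 * ρt → (ρ - ρt) ^ 2 ≤ C * potK γ ρt ρ) ∧
        (2 * ρt ≤ ρ → (ρ - ρt) ^ γ ≤ C * potK γ ρt ρ) := by
  have hγ' : 0 < γ - 1 := by linarith
  have hδ := two_rpow_sub_pos hγ
  have hT : 0 < ρt ^ γ := Real.rpow_pos_of_pos hρt γ
  set A : ℝ := 9 * ρt ^ 2 / ρt ^ γ with hA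
  set B : ℝ := 2 ^ γ * (γ - 1) / (2 ^ γ - γ - 1)
  have hA0 : 0 < A := by positivity
  have hB0 : 0 < B := by positivity
  refine ⟨max A B, lt_max_of_lt_left hA0, fun ρ hρ => ?_⟩
  obtain ⟨u, rfl⟩ : ∃ u, ρ = ρt * u := ⟨ρ / ρt, by field_simp⟩
  have hu : 0 < u := pos_of_mul_pos_right hρ hρt.le
  have hK := potK_mul_eq hγ hρt hu
  set E := (u ^ γ - 1 - γ * (u - 1)) / (γ - 1)
  constructor
  · intro h
    have hu2 : u ≤ 2 := by nlinarith
    have hq : (u - 1) ^ 2 ≤ 9 * E := sub_one_sq_le_relative_energy hγ hu hu2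
    have hE0 : 0 ≤ E := by nlinarith [sq_nonneg (u - 1)]
    rw [hK]
    calc (ρt * u - ρt) ^ 2 = ρt ^ 2 * (u - 1) ^ 2 := by ring
      _ ≤ ρt ^ 2 * (9 * E) := by gcongr
      _ = A * (ρt ^ γ * E) := by rw [hA]; field_simp
      _ ≤ max A B * (ρt ^ γ * E) := by gcongr; exact le_max_left _ _
  · intro h
    have hu2 : 2 ≤ u := by nlinarith
    have hq : u ^ γ ≤ B * E := rpow_le_relative_energy hγ hu2
    have hE0 : 0 ≤ E := by
      have : 0 < B * E := (Real.rpow_pos_of_pos hu γ).trans_le hq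
      exact (pos_of_mul_pos_right this hB0.le).le
    rw [hK]
    calc (ρt * u - ρt) ^ γ ≤ (ρt * u) ^ γ :=
          Real.rpow_le_rpow (by nlinarith) (by linarith) (by linarith)
      _ = ρt ^ γ * u ^ γ := Real.mul_rpow hρt.le hu.le
      _ ≤ ρt ^ γ * (B * E) := by gcongr
      _ = B * (ρt ^ γ * E) := by ring
      _ ≤ max A B * (ρt ^ γ * E) := by gcongr; exact le_max_right _ _
end
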